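/- Let r = 1 + 1/3^{k+1}. Then for every l ≥ 1, every I ∈ ℐ_l, and every x ∈ I^Δ, one has M_r w_k(x) ≤ 21·w_k(x), where w_k(x) = Σ_{l=1}^∞ (3^k/(3^{k−1}+1))^l · χ_{Ω_l}(x). -/

import Mathlib

open MeasureTheory Set Filter Topology
open scoped ENNReal

noncomputable section

namespace RT

/-- The Hilbert transform `Hf(x)`, defined as the principal-value limit
`lim_{ε→0⁺} ∫_{|x-y|>ε} f(y)/(x-y) dy` (junk value at points where the limit
does not exist). -/
def Hil (f : ℝ → ℝ) (x : ℝ) : ℝ :=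
  limUnder (𝓝[>] (0 : ℝ)) fun ε => ∫ y in {y : ℝ | ε < |x - y|}, f y / (x - y)

/-- The (uncentered) Hardy–Littlewood maximal function over bounded intervals:
`Mf(x) = sup_{I ∋ x} (1/|I|) ∫_I |f|`. -/
def HLMax (f : ℝ → ℝ) (x : ℝ) : ℝ≥0∞ :=
  ⨆ (a : ℝ) (b : ℝ) (_ : a < b) (_ : x ∈ Icc a b),
    (ENNReal.ofReal (b - a))⁻¹ * ∫⁻ y in Ioo a b, ENNReal.ofReal |f y|

/-- `M_r f = (M(|f|^r))^{1/r}`. -/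
def Mr (r : ℝ) (f : ℝ → ℝ) (x : ℝ) : ℝ≥0∞ :=
  HLMax (fun y => |f y| ^ r) x ^ (1 / r)

/-- The Orlicz maximal operator
`M_Φ f(x) = sup_{I ∋ x} inf {λ > 0 : (1/|I|) ∫_I Φ(|f|/λ) ≤ 1}`. -/
def MOrlicz (Φ : ℝ → ℝ) (f : ℝ → ℝ) (x : ℝ) : ℝ≥0∞ :=
  ⨆ (a : ℝ) (b : ℝ) (_ : a < b) (_ : x ∈ Icc a b),
    sInf {lam : ℝ≥0∞ | ∃ l : ℝ, 0 < l ∧ lam = ENNReal.ofReal l ∧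
      (∫⁻ y in Ioo a b, ENNReal.ofReal (Φ (|f y| / l))) ≤ ENNReal.ofReal (b - a)}

/-- The centered maximal operator with respect to a weight `v`:
`M^c_v h(x) = sup_{ρ>0} (1/v(B(x,ρ))) ∫_{B(x,ρ)} |h| v`. -/
def Mc (v h : ℝ → ℝ) (x : ℝ) : ℝ≥0∞ :=
  ⨆ (ρ : ℝ) (_ : 0 < ρ),
    (∫⁻ y in Ioo (x - ρ) (x + ρ), ENNReal.ofReal (v y))⁻¹ *
      ∫⁻ y in Ioo (x - ρ) (x + ρ), ENNReal.ofReal |h y| * ENNReal.ofReal (v y)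

/-- A Young function: convex, increasing, `Φ(0) = 0`, `Φ(t)/t → ∞`. -/
structure IsYoung (Φ : ℝ → ℝ) : Prop where
  convexOn : ConvexOn ℝ (Ici 0) Φ
  mono : MonotoneOn Φ (Ici 0)
  map_zero : Φ 0 = 0
  superlinear : Tendsto (fun t => Φ t / t) atTop atTop

/-- A weight: a nonnegative locally integrable function on `ℝ`. -/
def IsWeight (w : ℝ → ℝ) : Prop :=
  (∀ x, 0 ≤ w x) ∧ LocallyIntegrable w volume

/-! Triadic machinery: intervals are represented by their endpoint pairs,
`(a, b)` corresponding to `[a, b)`. -/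

/-- The length of the interval. -/
def len (I : ℝ × ℝ) : ℝ := I.2 - I.1

/-- The set `[a, b)` of the interval `I = (a, b)`. -/
def ivl (I : ℝ × ℝ) : Set ℝ := Ico I.1 I.2

/-- A triadic interval `[3^j n, 3^j (n+1))`, `j, n ∈ ℤ`. -/
def IsTriadic (I : ℝ × ℝ) : Prop :=
  ∃ j n : ℤ, I.1 = (3 : ℝ) ^ j * n ∧ I.2 = (3 : ℝ) ^ j * (n + 1)

/-- The middle third `I^Δ` of `I`: same center, one third of the length. -/
def mid (I : ℝ × ℝ) : ℝ × ℝ := (I.1 + (I.2 - I.1) / 3, I.2 - (I.2 - I.1) / 3)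

/-- `P` assigns to each triadic interval `J ⊆ [0,1)` a triadic interval
adjacent to `J^Δ` (on its left or on its right) with `|P J| = 3^{-k} |J|`. -/
def GoodP (k : ℕ) (P : ℝ × ℝ → ℝ × ℝ) : Prop :=
  ∀ J : ℝ × ℝ, IsTriadic J → ivl J ⊆ Ico (0 : ℝ) 1 →
    IsTriadic (P J) ∧ len (P J) = len J / 3 ^ k ∧
      ((P J).2 = (mid J).1 ∨ (P J).1 = (mid J).2)

/-- The families `𝒥_l`: `𝒥_1 = {[0,1)}`, and `𝒥_{l+1}` consists of the `3^{k-1}`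
triadic subintervals of `J^Δ` of length `|J|/3^k`, for each `J ∈ 𝒥_l`.
(`𝒥_0` is empty.) -/
def Jfam (k : ℕ) : ℕ → Set (ℝ × ℝ)
  | 0 => ∅
  | 1 => {((0 : ℝ), (1 : ℝ))}
  | l + 2 => {J' | IsTriadic J' ∧ ∃ J ∈ Jfam k (l + 1),
      len J' = len J / 3 ^ k ∧ ivl J' ⊆ ivl (mid J)}

/-- The families `ℐ_l = {P J : J ∈ 𝒥_l}`. -/
def Ifam (k : ℕ) (P : ℝ × ℝ → ℝ × ℝ) (l : ℕ) : Set (ℝ × ℝ) :=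
  P '' Jfam k l

/-- `Ω_l = ⋃_{I ∈ ℐ_l} I`. -/
def Omega (k : ℕ) (P : ℝ × ℝ → ℝ × ℝ) (l : ℕ) : Set ℝ :=
  ⋃ I ∈ Ifam k P l, ivl I

/-- The constant `3^k / (3^{k-1} + 1)`. -/
def alpha (k : ℕ) : ℝ := 3 ^ k / (3 ^ (k - 1) + 1)

/-- The Reguera–Thiele weight
`w_k = ∑_{l=1}^∞ (3^k/(3^{k-1}+1))^l χ_{Ω_l}`. -/
def wk (k : ℕ) (P : ℝ × ℝ → ℝ × ℝ) (x : ℝ) : ℝ :=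
  ∑' l : ℕ, alpha k ^ (l + 1) * (Omega k P (l + 1)).indicator (fun _ => (1 : ℝ)) x

/-- Grid interval number `n` at level `l`. -/
def gr (k l : ℕ) (n : ℤ) : ℝ × ℝ := ((n : ℝ) / 3 ^ (k * l), ((n : ℝ) + 1) / 3 ^ (k * l))

lemma gr_inter {k l : ℕ} {n m : ℤ} {x : ℝ} (h1 : x ∈ ivl (gr k l n)) (h2 : x ∈ ivl (gr k l m)) :
    n = m := by
  have hp : (0 : ℝ) < 3 ^ (k * l) := by positivity
  simp only [ivl, gr, mem_Ico, div_le_iff₀ hp, lt_div_iff₀ hp] at h1 h2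
  have a1 : (n : ℝ) < m + 1 := by linarith
  have a2 : (m : ℝ) < n + 1 := by linarith
  have b1 : n < m + 1 := by exact_mod_cast a1
  have b2 : m < n + 1 := by exact_mod_cast a2
  omega

lemma triadic_form {J : ℝ × ℝ} (h : IsTriadic J) (k l : ℕ) (hl : len J = 1 / 3 ^ (k * l)) :
    ∃ n : ℤ, J = gr k l n := by
  obtain ⟨j, n, h1, h2⟩ := h
  have : (3 : ℝ) ^ j = 1 / 3 ^ (k * l) := by
    rw [← hl, len, h1, h2]; ring
  refine ⟨n, Prod.ext ?_ ?_⟩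
  · simp only [gr]; rw [h1, this]; ring
  · simp only [gr]; rw [h2, this]; ring

lemma mid_sub {J : ℝ × ℝ} (h : J.1 ≤ J.2) : ivl (mid J) ⊆ ivl J := by
  intro x hx
  simp only [ivl, mid, mem_Ico] at *
  constructor <;> linarith

lemma gr_le (k l : ℕ) (n : ℤ) : (gr k l n).1 ≤ (gr k l n).2 := by
  simp only [gr]; gcongr; linarith

lemma gr_len (k l : ℕ) (n : ℤ) : len (gr k l n) = 1 / 3 ^ (k * l) := by
  simp only [gr, len]; ring

lemma J_form (k : ℕ) (l : ℕ) : ∀ J ∈ Jfam k (l + 1),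
    (∃ n, J = gr k l n) ∧ IsTriadic J ∧ ivl J ⊆ Ico (0 : ℝ) 1 := by
  induction l with
  | zero =>
    intro J hJ
    have : J = ((0 : ℝ), (1 : ℝ)) := hJ
    subst this
    refine ⟨⟨0, by simp [gr]⟩, ⟨0, 0, by simp, by simp⟩, by simp [ivl]⟩
  | succ l ih =>
    rintro J ⟨hT, J', hJ', hlen, hsub⟩
    obtain ⟨⟨n, rfl⟩, -, h3⟩ := ih J' hJ'
    refine ⟨triadic_form hT k (l + 1) ?_, hT, hsub.trans ((mid_sub (gr_le _ _ _)).trans h3)⟩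
    rw [hlen, gr_len, mul_add, pow_add, mul_one]
    field_simp

lemma anc (k l i : ℕ) : ∀ J ∈ Jfam k (l + 1 + i), ∃ J' ∈ Jfam k (l + 1), ivl J ⊆ ivl J' := by
  induction i with
  | zero => exact fun J hJ => ⟨J, hJ, subset_rfl⟩
  | succ i ih =>
    intro J hJ
    rw [show l + 1 + (i + 1) = (l + i) + 2 by ring] at hJ
    obtain ⟨hT, J', hJ', hlen, hsub⟩ := hJ
    rw [show l + i + 1 = l + 1 + i by ring] at hJ'
    obtain ⟨J2, h2, h3⟩ := ih J' hJ'
    obtain ⟨⟨n, rfl⟩, -, -⟩ := J_form k (l + i) J' (by convert hJ' using 2; ring)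
    exact ⟨J2, h2, hsub.trans ((mid_sub (gr_le _ _ _)).trans h3)⟩

lemma P_sub {k : ℕ} (hk : 2 ≤ k) {P : ℝ × ℝ → ℝ × ℝ} (hP : GoodP k P) {l : ℕ} {J : ℝ × ℝ}
    (hJ : J ∈ Jfam k (l + 1)) :
    ivl (P J) ⊆ ivl J ∧ (∀ x ∈ ivl (P J), x ∉ ivl (mid J)) ∧
      len (P J) = 1 / 3 ^ (k * (l + 1)) := by
  obtain ⟨⟨n, rfl⟩, hT, h3⟩ := J_form k l J hJ
  obtain ⟨-, h5, h6⟩ := hP _ hT h3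
  have hl : len (P (gr k l n)) = 1 / 3 ^ (k * (l + 1)) := by
    rw [h5, gr_len, mul_add, pow_add, mul_one]
    field_simp
  have hpos : 0 ≤ len (gr k l n) := by rw [gr_len]; positivity
  have h7 : len (P (gr k l n)) ≤ len (gr k l n) / 3 := by
    rw [h5]
    gcongr
    exact le_self_pow₀ (by norm_num) (by omega)
  refine ⟨?_, ?_, hl⟩
  · intro x hx
    simp only [len, mid, ivl, mem_Ico] at *
    rcases h6 with h6 | h6 <;> constructor <;> linarith
  · intro x hx hx'
    simp only [len, mid, ivl, mem_Ico] at *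
    rcases h6 with h6 | h6 <;> linarith

lemma J_eq {k l : ℕ} {J J' : ℝ × ℝ} (h : J ∈ Jfam k (l + 1)) (h' : J' ∈ Jfam k (l + 1)) {x : ℝ}
    (hx : x ∈ ivl J) (hx' : x ∈ ivl J') : J = J' := by
  obtain ⟨⟨n, rfl⟩, -⟩ := J_form k l J h
  obtain ⟨⟨m, rfl⟩, -⟩ := J_form k l J' h'
  rw [gr_inter hx hx']

lemma mem_Omega {k l : ℕ} {P : ℝ × ℝ → ℝ × ℝ} {x : ℝ} :
    x ∈ Omega k P l ↔ ∃ J ∈ Jfam k l, x ∈ ivl (P J) := by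
  simp only [Omega, Ifam, mem_iUnion, mem_image, exists_prop, exists_exists_and_eq_and]

/-- A point of `Ω_{l+1+i}` lies in some member of `𝒥_{l+1}`. -/
lemma Omega_in {k : ℕ} (hk : 2 ≤ k) {P : ℝ × ℝ → ℝ × ℝ} (hP : GoodP k P) {l i : ℕ} {x : ℝ}
    (hx : x ∈ Omega k P (l + 1 + i)) : ∃ J ∈ Jfam k (l + 1), x ∈ ivl J := by
  obtain ⟨J, hJ, hxJ⟩ := mem_Omega.1 hx
  obtain ⟨J', hJ', hs⟩ := anc k l i J hJ
  rw [show l + 1 + i = l + i + 1 by ring] at hJ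
  exact ⟨J', hJ', hs ((P_sub hk hP hJ).1 hxJ)⟩

lemma Omega_disj_lt {k : ℕ} (hk : 2 ≤ k) {P : ℝ × ℝ → ℝ × ℝ} (hP : GoodP k P) {l i : ℕ} {x : ℝ}
    (hx : x ∈ Omega k P (l + 1)) (hx' : x ∈ Omega k P (l + 1 + 1 + i)) : False := by
  obtain ⟨J, hJ, hxJ⟩ := mem_Omega.1 hx
  obtain ⟨J', ⟨hT, J2, hJ2, hlen, hsub⟩, hxJ'⟩ := Omega_in (l := l + 1) hk hP hx'
  have h2 := hsub hxJ'
  obtain ⟨⟨n, hn⟩, -⟩ := J_form k l J2 hJ2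
  have h3 : x ∈ ivl J2 := mid_sub (by rw [hn]; exact gr_le _ _ _) h2
  have : J = J2 := J_eq hJ hJ2 ((P_sub hk hP hJ).1 hxJ) h3
  subst this
  exact (P_sub hk hP hJ).2.1 x hxJ h2

lemma Omega_disj {k : ℕ} (hk : 2 ≤ k) {P : ℝ × ℝ → ℝ × ℝ} (hP : GoodP k P) {l m : ℕ} {x : ℝ}
    (hx : x ∈ Omega k P (l + 1)) (hx' : x ∈ Omega k P (m + 1)) : l = m := by
  rcases lt_trichotomy l m with h | h | h
  · obtain ⟨i, rfl⟩ := Nat.exists_eq_add_of_lt h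
    exact (Omega_disj_lt hk hP (i := i) hx (by convert hx' using 2; ring)).elim
  · exact h
  · obtain ⟨i, rfl⟩ := Nat.exists_eq_add_of_lt h
    exact (Omega_disj_lt hk hP (i := i) hx' (by convert hx using 2; ring)).elim

lemma wk_eq {k : ℕ} (hk : 2 ≤ k) {P : ℝ × ℝ → ℝ × ℝ} (hP : GoodP k P) {l : ℕ} {x : ℝ}
    (hx : x ∈ Omega k P (l + 1)) : wk k P x = alpha k ^ (l + 1) := by
  unfold wk
  rw [tsum_eq_single l]
  · simp [hx]
  · intro m hm
    have : x ∉ Omega k P (m + 1) := fun h => hm (Omega_disj hk hP h hx)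
    simp [this]

lemma wk_zero {k : ℕ} {P : ℝ × ℝ → ℝ × ℝ} {x : ℝ}
    (hx : ∀ l, x ∉ Omega k P (l + 1)) : wk k P x = 0 := by
  unfold wk
  simp [hx]

lemma countable_triadic : {I : ℝ × ℝ | IsTriadic I}.Countable := by
  apply (countable_range (fun p : ℤ × ℤ =>
    (((3 : ℝ) ^ p.1 * p.2, (3 : ℝ) ^ p.1 * (p.2 + 1)) : ℝ × ℝ))).mono
  rintro I ⟨j, n, h1, h2⟩
  exact ⟨(j, n), Prod.ext h1.symm h2.symm⟩

lemma meas_Omega (k : ℕ) (P : ℝ × ℝ → ℝ × ℝ) (l : ℕ) : MeasurableSet (Omega k P (l + 1)) := by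
  unfold Omega
  apply MeasurableSet.biUnion
  · apply Countable.image
    exact countable_triadic.mono fun J hJ => (J_form k l J hJ).2.1
  · intro I _
    exact measurableSet_Ico

/-- A child of a grid interval is one of the `3^{k-1}` listed ones. -/
lemma child {k l : ℕ} (hk : 2 ≤ k) {n m : ℤ} (h : ivl (gr k (l + 1) m) ⊆ ivl (mid (gr k l n))) :
    ∃ i < 3 ^ (k - 1), m = 3 ^ k * n + 3 ^ (k - 1) + (i : ℕ) := by
  obtain ⟨q, rfl⟩ : ∃ q, k = q + 1 := ⟨k - 1, by omega⟩
  have hp : (0 : ℝ) < 3 ^ ((q + 1) * l) := by positivity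
  have hq : (0 : ℝ) < 3 ^ q := by positivity
  have hlt : (gr (q + 1) (l + 1) m).1 < (gr (q + 1) (l + 1) m).2 := by
    simp only [gr]; gcongr; linarith
  have h' := (Ico_subset_Ico_iff hlt).1 h
  simp only [gr, mid] at h'
  obtain ⟨h1, h2⟩ := h'
  have e : (3 : ℝ) ^ ((q + 1) * (l + 1)) = 3 ^ ((q + 1) * l) * (3 ^ q * 3) := by ring
  rw [e] at h1 h2
  field_simp at h1 h2
  have b1 : 3 ^ (q + 1) * n + 3 ^ q ≤ m := by
    have : (3 : ℝ) ^ (q + 1) * n + 3 ^ q ≤ m := by rw [pow_succ]; nlinarith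
    exact_mod_cast this
  have b2 : m + 1 ≤ 3 ^ (q + 1) * n + 2 * 3 ^ q := by
    have : (m : ℝ) + 1 ≤ 3 ^ (q + 1) * n + 2 * 3 ^ q := by rw [pow_succ]; nlinarith
    exact_mod_cast this
  refine ⟨(m - (3 ^ (q + 1) * n + 3 ^ q)).toNat, ?_, ?_⟩
  · simp only [Nat.add_sub_cancel]
    zify
    rw [Int.toNat_of_nonneg (by linarith)]
    linarith
  · simp only [Nat.add_sub_cancel]
    rw [Int.toNat_of_nonneg (by linarith)]
    ring

lemma vol_Omega {k : ℕ} (hk : 2 ≤ k) {P : ℝ × ℝ → ℝ × ℝ} (hP : GoodP k P) (i : ℕ) :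
    ∀ (l : ℕ) (n : ℤ), volume (Omega k P (l + 1 + i) ∩ ivl (gr k l n)) ≤
      ENNReal.ofReal (1 / 3 ^ (k * (l + 1)) / 3 ^ i) := by
  induction i with
  | zero =>
    intro l n
    by_cases hJ : gr k l n ∈ Jfam k (l + 1)
    · have : Omega k P (l + 1 + 0) ∩ ivl (gr k l n) ⊆ ivl (P (gr k l n)) := by
        rintro x ⟨hx, hx'⟩
        obtain ⟨J, hJ', hxJ⟩ := mem_Omega.1 hx
        rwa [J_eq hJ hJ' hx' ((P_sub hk hP hJ').1 hxJ)]
      refine (measure_mono this).trans ?_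
      rw [ivl, Real.volume_Ico, pow_zero, div_one, ← (P_sub hk hP hJ).2.2, len]
    · have : Omega k P (l + 1 + 0) ∩ ivl (gr k l n) = ∅ := by
        rw [eq_empty_iff_forall_notMem]
        rintro x ⟨hx, hx'⟩
        obtain ⟨J, hJ', hxJ⟩ := Omega_in hk hP hx
        obtain ⟨⟨m, rfl⟩, -⟩ := J_form k l J hJ'
        rw [gr_inter hx' hxJ] at hJ
        exact hJ hJ'
      rw [this]; simp
  | succ i ih =>
    intro l n
    have : Omega k P (l + 1 + (i + 1)) ∩ ivl (gr k l n) ⊆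
        ⋃ j ∈ Finset.range (3 ^ (k - 1)), Omega k P ((l + 1) + 1 + i) ∩
          ivl (gr k (l + 1) (3 ^ k * n + 3 ^ (k - 1) + (j : ℕ))) := by
      rintro x ⟨hx, hx'⟩
      rw [show l + 1 + (i + 1) = (l + 1) + 1 + i by ring] at hx
      obtain ⟨J, hJ, hxJ⟩ := Omega_in hk hP hx
      obtain ⟨⟨m, rfl⟩, -⟩ := J_form k (l + 1) J hJ
      obtain ⟨-, J2, hJ2, -, hsub⟩ := hJ
      obtain ⟨⟨n', rfl⟩, -⟩ := J_form k l J2 hJ2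
      have := gr_inter hx' (mid_sub (gr_le _ _ _) (hsub hxJ))
      subst this
      obtain ⟨j, hj, rfl⟩ := child hk hsub
      simp only [mem_iUnion]
      exact ⟨j, Finset.mem_range.2 hj, hx, hxJ⟩
    refine (measure_mono this).trans ((measure_biUnion_finset_le _ _).trans ?_)
    refine (Finset.sum_le_sum fun j _ => ih (l + 1) _).trans ?_
    rw [Finset.sum_const, Finset.card_range, ← ENNReal.ofReal_nsmul]
    apply ENNReal.ofReal_le_ofReal
    obtain ⟨q, rfl⟩ : ∃ q, k = q + 1 := ⟨k - 1, by omega⟩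
    simp only [Nat.add_sub_cancel, nsmul_eq_mul]
    push_cast
    have e : (3 : ℝ) ^ ((q + 1) * (l + 1 + 1)) = 3 ^ ((q + 1) * (l + 1)) * (3 ^ q * 3) := by ring
    rw [e, pow_succ (3 : ℝ) i]
    apply le_of_eq
    field_simp

lemma vol_Omega_Ioo {k : ℕ} (hk : 2 ≤ k) {P : ℝ × ℝ → ℝ × ℝ} (hP : GoodP k P) (l i : ℕ)
    {a b : ℝ} (hab : a < b) :
    volume (Omega k P (l + 1 + i) ∩ Ioo a b) ≤
      ENNReal.ofReal (((b - a) + 2 / 3 ^ (k * l)) / 3 ^ k / 3 ^ i) := by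
  have hp : (0 : ℝ) < 3 ^ (k * l) := by positivity
  have hfl : ⌊a * 3 ^ (k * l)⌋ ≤ ⌊b * 3 ^ (k * l)⌋ := Int.floor_le_floor (by gcongr)
  have : Omega k P (l + 1 + i) ∩ Ioo a b ⊆
      ⋃ n ∈ Finset.Icc ⌊a * 3 ^ (k * l)⌋ ⌊b * 3 ^ (k * l)⌋,
        Omega k P (l + 1 + i) ∩ ivl (gr k l n) := by
    rintro x ⟨hx, hx'⟩
    simp only [mem_iUnion]
    refine ⟨⌊x * 3 ^ (k * l)⌋, Finset.mem_Icc.2 ⟨?_, ?_⟩, hx, ?_⟩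
    · apply Int.floor_le_floor; have := hx'.1; gcongr
    · apply Int.floor_le_floor; have := hx'.2; gcongr
    · simp only [ivl, gr, mem_Ico, div_le_iff₀ hp, lt_div_iff₀ hp]
      exact ⟨Int.floor_le _, Int.lt_floor_add_one _⟩
  refine (measure_mono this).trans ((measure_biUnion_finset_le _ _).trans ?_)
  refine (Finset.sum_le_sum fun j _ => vol_Omega hk hP i l j).trans ?_
  rw [Finset.sum_const, ← ENNReal.ofReal_nsmul]
  apply ENNReal.ofReal_le_ofReal
  rw [nsmul_eq_mul, Int.card_Icc]
  have hc : (((⌊b * 3 ^ (k * l)⌋ + 1 - ⌊a * 3 ^ (k * l)⌋).toNat : ℕ) : ℝ) ≤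
      (b - a) * 3 ^ (k * l) + 2 := by
    have h1 : (((⌊b * 3 ^ (k * l)⌋ + 1 - ⌊a * 3 ^ (k * l)⌋).toNat : ℤ) : ℝ) =
      ⌊b * 3 ^ (k * l)⌋ + 1 - ⌊a * 3 ^ (k * l)⌋ := by
      rw [Int.toNat_of_nonneg (by linarith)]; push_cast; ring
    rw [Int.cast_natCast] at h1
    rw [h1]
    have h2 := Int.floor_le (b * 3 ^ (k * l))
    have h3 := Int.lt_floor_add_one (a * 3 ^ (k * l))
    linarith
  refine (mul_le_mul_of_nonneg_right hc (by positivity)).trans (le_of_eq ?_)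
  rw [mul_add, pow_add, mul_one]
  field_simp

lemma alpha_facts {k : ℕ} (hk : 2 ≤ k) {r : ℝ} (hr : r = 1 + 1 / (3:ℝ) ^ (k + 1)) :
    1 ≤ alpha k ∧ alpha k ^ (r - 1) ≤ 29 / 27 ∧
      alpha k ^ r / 3 < 1 ∧ alpha k ^ r / 3 ^ k * (1 - alpha k ^ r / 3)⁻¹ ≤ 29 / 21 := by
  obtain ⟨q, rfl⟩ : ∃ q, k = q + 1 := ⟨k - 1, by omega⟩
  have hN : (3 : ℝ) ≤ 3 ^ q := le_self_pow₀ (by norm_num) (by omega)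
  have ha : alpha (q + 1) = 3 * 3 ^ q / (3 ^ q + 1) := by
    simp only [alpha, Nat.add_sub_cancel, pow_succ]; ring
  have hr1 : r - 1 = 1 / (9 * 3 ^ q) := by rw [hr]; ring
  generalize hA : alpha (q + 1) = A at *
  rw [pow_succ]
  generalize (3 : ℝ) ^ q = N at *
  have hA1 : 1 ≤ A := by rw [ha, le_div_iff₀ (by positivity)]; linarith
  have hA3 : A ≤ 3 := by rw [ha, div_le_iff₀ (by positivity)]; linarith
  have hN0 : 0 < N := by linarith
  have hb : A ^ (r - 1) ≤ 1 + 2 / (9 * N) := by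
    have h := rpow_one_add_le_one_add_mul_self (s := A - 1) (by linarith) (p := r - 1)
      (by rw [hr1]; positivity)
      (by rw [hr1, div_le_iff₀ (by positivity)]; linarith)
    rw [add_sub_cancel] at h
    refine h.trans ?_
    rw [hr1]
    have : 1 / (9 * N) * (A - 1) ≤ 1 / (9 * N) * 2 := by gcongr; linarith
    calc _ ≤ 1 + 1 / (9 * N) * 2 := by linarith
      _ = _ := by ring
  have hb2 : A ^ (r - 1) ≤ 29 / 27 := by
    refine hb.trans ?_
    have : 2 / (9 * N) ≤ 2 / (9 * 3) := by gcongr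
    linarith
  have hAr : A ^ r = A * A ^ (r - 1) := by
    conv_lhs => rw [show r = 1 + (r - 1) by ring]
    rw [Real.rpow_add (by linarith), Real.rpow_one]
  have h1 : A ^ r / 3 ≤ (9 * N + 2) / (9 * (N + 1)) := by
    rw [hAr]
    calc A * A ^ (r - 1) / 3 ≤ A * (1 + 2 / (9 * N)) / 3 := by gcongr
      _ = _ := by rw [ha]; field_simp
  have h2 : 7 / (9 * (N + 1)) ≤ 1 - A ^ r / 3 := by
    have : 7 / (9 * (N + 1)) = 1 - (9 * N + 2) / (9 * (N + 1)) := by field_simp; ring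
    linarith
  have h3 : 0 < 7 / (9 * (N + 1)) := by positivity
  refine ⟨hA1, hb2, by linarith, ?_⟩
  have h4 : (1 - A ^ r / 3)⁻¹ ≤ (7 / (9 * (N + 1)))⁻¹ := by gcongr
  have hpos : 0 ≤ A ^ (r - 1) := by positivity
  calc A ^ r / (N * 3) * (1 - A ^ r / 3)⁻¹ ≤ A ^ r / (N * 3) * (7 / (9 * (N + 1)))⁻¹ := by
        gcongr
    _ = A ^ (r - 1) * (9 / 7) := by rw [hAr, ha]; field_simp
    _ ≤ 29 / 27 * (9 / 7) := by gcongr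
    _ = 29 / 21 := by norm_num

lemma pointwise {k : ℕ} (hk : 2 ≤ k) {P : ℝ × ℝ → ℝ × ℝ} (hP : GoodP k P) {r : ℝ}
    (hr : r = 1 + 1 / (3:ℝ) ^ (k + 1)) (l : ℕ) (y : ℝ) :
    ENNReal.ofReal |(|wk k P y| ^ r)| ≤ ENNReal.ofReal ((alpha k ^ r) ^ l) +
      ∑' i : ℕ, (Omega k P (l + 1 + i)).indicator
        (fun _ => ENNReal.ofReal ((alpha k ^ r) ^ (l + 1 + i))) y := by
  have hA := (alpha_facts hk hr).1
  have hr0 : 0 < r := by rw [hr]; positivity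
  have hAr : 1 ≤ alpha k ^ r := Real.one_le_rpow hA hr0.le
  by_cases h : ∃ m, y ∈ Omega k P (m + 1)
  · obtain ⟨m, hm⟩ := h
    have hw : |(|wk k P y| ^ r)| = (alpha k ^ r) ^ (m + 1) := by
      rw [wk_eq hk hP hm, abs_of_nonneg (by positivity), abs_of_nonneg (by positivity),
        ← Real.rpow_natCast, ← Real.rpow_natCast, ← Real.rpow_mul (by positivity),
        ← Real.rpow_mul (by positivity), mul_comm]
    rw [hw]
    rcases lt_or_ge m l with hml | hml
    · refine le_trans ?_ le_self_add
      apply ENNReal.ofReal_le_ofReal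
      exact pow_le_pow_right₀ hAr hml
    · obtain ⟨i, rfl⟩ := Nat.exists_eq_add_of_le hml
      rw [show l + i + 1 = l + 1 + i by ring] at hm ⊢
      refine le_trans ?_ le_add_self
      refine le_trans ?_ (ENNReal.le_tsum i)
      simp [hm]
  · push Not at h
    rw [wk_zero h, abs_zero, Real.zero_rpow hr0.ne']
    simp

lemma avg {k : ℕ} (hk : 2 ≤ k) {P : ℝ × ℝ → ℝ × ℝ} (hP : GoodP k P) {r : ℝ}
    (hr : r = 1 + 1 / (3:ℝ) ^ (k + 1)) (l : ℕ) {a b : ℝ} (hab : a < b)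
    (hlen : 1 / 3 ^ (k * l) / 3 ≤ b - a) :
    ∫⁻ y in Ioo a b, ENNReal.ofReal |(|wk k P y| ^ r)| ≤
      ENNReal.ofReal (21 * (alpha k ^ r) ^ l * (b - a)) := by
  obtain ⟨hA, -, hA3, hA4⟩ := alpha_facts hk hr
  have hr0 : 0 < r := by rw [hr]; positivity
  have hAr : 1 ≤ alpha k ^ r := Real.one_le_rpow hA hr0.le
  have hm : ∀ i, MeasurableSet (Omega k P (l + 1 + i)) := fun i => by
    rw [show l + 1 + i = l + i + 1 by ring]; exact meas_Omega _ _ _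
  refine (lintegral_mono fun y => pointwise hk hP hr l y).trans ?_
  rw [lintegral_add_left measurable_const, lintegral_tsum
    (fun i => (measurable_const.indicator (hm i)).aemeasurable)]
  simp only [lintegral_const, lintegral_indicator_const (hm _), Measure.restrict_apply (hm _),
    Measure.restrict_apply MeasurableSet.univ, univ_inter, Real.volume_Ioo]
  generalize alpha k ^ r = B at *
  have hB0 : 0 < B := by linarith
  have hd : 0 < b - a := by linarith
  have key : ∀ i, ENNReal.ofReal (B ^ (l + 1 + i)) * volume (Omega k P (l + 1 + i) ∩ Ioo a b) ≤
      ENNReal.ofReal (B ^ l * (7 * (b - a)) * (B / 3 ^ k) * (B / 3) ^ i) := by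
    intro i
    refine (mul_le_mul_right (vol_Omega_Ioo hk hP l i hab) _).trans ?_
    rw [← ENNReal.ofReal_mul (by positivity)]
    apply ENNReal.ofReal_le_ofReal
    have h7 : (b - a) + 2 / 3 ^ (k * l) ≤ 7 * (b - a) := by
      have : (2 : ℝ) / 3 ^ (k * l) = 6 * (1 / 3 ^ (k * l) / 3) := by ring
      linarith
    calc B ^ (l + 1 + i) * (((b - a) + 2 / 3 ^ (k * l)) / 3 ^ k / 3 ^ i)
        ≤ B ^ (l + 1 + i) * ((7 * (b - a)) / 3 ^ k / 3 ^ i) := by gcongr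
      _ = _ := by rw [div_pow]; ring
  have hs := (hasSum_geometric_of_lt_one (by positivity) hA3).mul_left
    (B ^ l * (7 * (b - a)) * (B / 3 ^ k))
  have hsum : ∑' i, ENNReal.ofReal (B ^ l * (7 * (b - a)) * (B / 3 ^ k) * (B / 3) ^ i) =
      ENNReal.ofReal (B ^ l * (7 * (b - a)) * (B / 3 ^ k) * (1 - B / 3)⁻¹) := by
    rw [← ENNReal.ofReal_tsum_of_nonneg (fun i => by positivity) hs.summable, hs.tsum_eq]
  refine (add_le_add_right ((ENNReal.tsum_le_tsum key).trans hsum.le) _).trans ?_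
  have h1 : 0 ≤ (1 - B / 3)⁻¹ := inv_nonneg.2 (by linarith)
  rw [← ENNReal.ofReal_mul (by positivity), ← ENNReal.ofReal_add (by positivity) (by positivity)]
  apply ENNReal.ofReal_le_ofReal
  have hpos : 0 ≤ B ^ l * (b - a) := by positivity
  nlinarith [mul_le_mul_of_nonneg_left hA4 hpos]

/-- **Lemma 2.2.** With `r = 1 + 1/3^{k+1}`, for every `l ≥ 1`,
`I ∈ ℐ_l` and `x ∈ I^Δ` one has `M_r w_k(x) ≤ 21 w_k(x)`. -/
theorem statement3 (k : ℕ) (hk : 2 ≤ k) (P : ℝ × ℝ → ℝ × ℝ) (hP : GoodP k P)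
    (r : ℝ) (hr : r = 1 + 1 / (3:ℝ) ^ (k + 1)) :
    ∀ l : ℕ, 1 ≤ l → ∀ I ∈ Ifam k P l, ∀ x ∈ ivl (mid I),
      Mr r (wk k P) x ≤ ENNReal.ofReal (21 * wk k P x) := by
  intro l hl I hI x hx
  obtain ⟨l, rfl⟩ : ∃ q, l = q + 1 := ⟨l - 1, by omega⟩
  obtain ⟨J, hJ, rfl⟩ := hI
  obtain ⟨-, -, hlenI⟩ := P_sub hk hP hJ
  have hOm : ∀ y ∈ ivl (P J), y ∈ Omega k P (l + 1) := fun y hy => mem_Omega.2 ⟨J, hJ, hy⟩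
  have hA := (alpha_facts hk hr).1
  have hr0 : 0 < r := by rw [hr]; positivity
  have hr1 : 1 ≤ r := by rw [hr]; simp
  have hlp : 0 < len (P J) := by rw [hlenI]; positivity
  have hxI : x ∈ ivl (P J) := mid_sub (by unfold len at hlp; linarith) hx
  rw [wk_eq hk hP (hOm x hxI)]
  have hw : ∀ y ∈ ivl (P J), |(|wk k P y| ^ r)| = (alpha k ^ r) ^ (l + 1) := by
    intro y hy
    rw [wk_eq hk hP (hOm y hy), abs_of_nonneg (by positivity), abs_of_nonneg (by positivity),
      ← Real.rpow_natCast, ← Real.rpow_natCast, ← Real.rpow_mul (by positivity),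
      ← Real.rpow_mul (by positivity), mul_comm]
  have hM : HLMax (fun y => |wk k P y| ^ r) x ≤
      ENNReal.ofReal (21 * (alpha k ^ r) ^ (l + 1)) := by
    unfold HLMax
    refine iSup_le fun a => iSup_le fun b => iSup_le fun hab => iSup_le fun hxab => ?_
    have hd : 0 < b - a := by linarith
    have hint : ∫⁻ y in Ioo a b, ENNReal.ofReal |(|wk k P y| ^ r)| ≤
        ENNReal.ofReal (21 * (alpha k ^ r) ^ (l + 1) * (b - a)) := by
      rcases le_or_gt (1 / 3 ^ (k * (l + 1)) / 3) (b - a) with h | h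
      · exact avg hk hP hr (l + 1) hab h
      · have hsub : Ioo a b ⊆ ivl (P J) := by
          intro y hy
          rw [← hlenI] at h
          simp only [ivl, mid, len, mem_Ico, mem_Icc, mem_Ioo] at *
          constructor <;> linarith [hx.1, hx.2, hxab.1, hxab.2, hy.1, hy.2]
        have : ∫⁻ y in Ioo a b, ENNReal.ofReal |(|wk k P y| ^ r)| =
            ∫⁻ y in Ioo a b, ENNReal.ofReal ((alpha k ^ r) ^ (l + 1)) :=
          setLIntegral_congr_fun measurableSet_Ioo fun y hy => by
            simp only [hw y (hsub hy)]
        rw [this, setLIntegral_const, Real.volume_Ioo, ← ENNReal.ofReal_mul (by positivity)]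
        apply ENNReal.ofReal_le_ofReal
        have : 0 ≤ (alpha k ^ r) ^ (l + 1) * (b - a) := by positivity
        linarith
    refine (mul_le_mul_right hint _).trans (le_of_eq ?_)
    rw [← ENNReal.ofReal_inv_of_pos hd, ← ENNReal.ofReal_mul (by positivity)]
    congr 1
    field_simp
  unfold Mr
  refine (ENNReal.rpow_le_rpow hM (by positivity)).trans ?_
  rw [ENNReal.ofReal_rpow_of_nonneg (by positivity) (by positivity)]
  apply ENNReal.ofReal_le_ofReal
  rw [Real.mul_rpow (by norm_num) (by positivity)]
  have e : ((alpha k ^ r) ^ (l + 1)) ^ (1 / r) = alpha k ^ (l + 1) := by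
    rw [← Real.rpow_natCast, ← Real.rpow_natCast, ← Real.rpow_mul (by positivity),
      ← Real.rpow_mul (by positivity)]
    congr 1
    field_simp
  rw [e]
  gcongr
  calc (21 : ℝ) ^ (1 / r) ≤ 21 ^ (1 : ℝ) := by
        apply Real.rpow_le_rpow_of_exponent_le (by norm_num)
        rw [div_le_one hr0]; exact hr1
    _ = 21 := Real.rpow_one _

end RT

end
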